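/- arXiv:1202.2287 — 3 statements merged into one kernel-verified Lean document; each statement's English description precedes it below -/
import Mathlib

section
/- Every QRB-domain, equipped with its Scott topology, is stably compact. -/
/-!
A quasi-deflation `φ` is antitone for inclusion, and since its image is finite each set
`{y | φ y ⊆ A}` is Scott-open (`IsQuasiDeflation.scottOpen_subset`). Hence `φ x` is a compact
neighbourhood of `x`, as `x ∈ {y | φ y ⊆ φ x} ⊆ φ x`.

The other ingredient is Rudin's lemma (`rudin`): if the intersection of a filtered family of
finitary compacts of a dcpo lies in a Scott-open set `U`, then so does some member of the family.
Let `φ` be a generating family.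

* Local compactness: `⋂ i, φ i x = ↑x`, so if `x ∈ U` then some `φ i x` lies in `U`.
* Sobriety: given a closed irreducible `C`, finiteness of the image of `φ i` and irreducibility
  yield `y i ∈ C` such that `φ i (y i)` is least among the `φ i x` with `x ∈ C`. Each of these
  sets meets `C`, so by Rudin's lemma so does their intersection, and a point of `C` in that
  intersection is above all of `C`.
* Coherence: a compact saturated `Q` is the intersection over `i` of `⋃ x ∈ Q, φ i x`. So, for
  `Q = Q₁ ∩ Q₂`, the filtered finitary compacts `⋃ x ∈ Q, φ i x` have intersection `Q`, and by
  Rudin's lemma every open set containing `Q` contains one of them, which makes `Q` compact.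
-/


open Set TopologicalSpace

universe u v

section ScottTopology

variable {α : Type u}

/-- A Scott-open subset of a preorder: an upward-closed set that is inaccessible by
directed suprema. -/
def ScottOpen [Preorder α] (U : Set α) : Prop :=
  IsUpperSet U ∧ ∀ d : Set α, d.Nonempty → DirectedOn (· ≤ ·) d →
    ∀ a : α, IsLUB d a → a ∈ U → (d ∩ U).Nonempty

/-- The Scott topology on a preorder. -/
def scottTop (α : Type u) [Preorder α] : TopologicalSpace α where
  IsOpen := ScottOpen
  isOpen_univ := by
    refine ⟨isUpperSet_univ, ?_⟩
    intro d hd _ a _ _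
    obtain ⟨x, hx⟩ := hd
    exact ⟨x, hx, trivial⟩
  isOpen_inter := by
    rintro U V ⟨hU, hU'⟩ ⟨hV, hV'⟩
    refine ⟨hU.inter hV, ?_⟩
    intro d hd hdir a ha hmem
    obtain ⟨x, hxd, hxU⟩ := hU' d hd hdir a ha hmem.1
    obtain ⟨y, hyd, hyV⟩ := hV' d hd hdir a ha hmem.2
    obtain ⟨z, hzd, hxz, hyz⟩ := hdir x hxd y hyd
    exact ⟨z, hzd, hU hxz hxU, hV hyz hyV⟩
  isOpen_sUnion := by
    intro S hS
    constructor
    · intro a b hab ha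
      obtain ⟨U, hUS, haU⟩ := ha
      exact ⟨U, hUS, (hS U hUS).1 hab haU⟩
    · intro d hd hdir a ha hmem
      obtain ⟨U, hUS, haU⟩ := hmem
      obtain ⟨x, hxd, hxU⟩ := (hS U hUS).2 d hd hdir a ha haU
      exact ⟨x, hxd, U, hUS, hxU⟩

/-- A dcpo: every nonempty directed subset has a least upper bound. -/
def IsDcpo (α : Type u) [Preorder α] : Prop :=
  ∀ d : Set α, d.Nonempty → DirectedOn (· ≤ ·) d → ∃ a : α, IsLUB d a

/-- The upward closure `↑E = {x | ∃ e ∈ E, e ≤ x}` of a set. -/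
def upClos [Preorder α] (E : Set α) : Set α := {x | ∃ e ∈ E, e ≤ x}

/-- A finitary compact: a set of the form `↑E` with `E` finite and nonempty. -/
def IsFinitaryCompact [Preorder α] (A : Set α) : Prop :=
  ∃ E : Set α, E.Finite ∧ E.Nonempty ∧ A = upClos E

/-- `Fin(α)`: the nonempty finitary compacts of `α`, ordered by reverse inclusion. -/
def FinCompacts (α : Type u) [Preorder α] : Type u := {A : Set α // IsFinitaryCompact A}

instance FinCompacts.instPartialOrder [Preorder α] : PartialOrder (FinCompacts α) where
  le A B := B.1 ⊆ A.1
  le_refl A := subset_rfl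
  le_trans A B C h1 h2 := subset_trans h2 h1
  le_antisymm A B h1 h2 := Subtype.ext (subset_antisymm h2 h1)

/-- `U ⋘ x`: every directed family whose least upper bound is above `x` has some
member in `U`. -/
def approxes [Preorder α] (U : Set α) (x : α) : Prop :=
  ∀ d : Set α, d.Nonempty → DirectedOn (· ≤ ·) d →
    ∀ a : α, IsLUB d a → x ≤ a → ∃ z ∈ d, z ∈ U

/-- A quasi-deflation: a map `φ : α → Fin_σ(α)`, continuous for the Scott topologies,
such that `x ∈ φ x` for every `x`, and with finite image. -/
def IsQuasiDeflation [Preorder α] (φ : α → FinCompacts α) : Prop :=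
  @Continuous α (FinCompacts α) (scottTop α) (scottTop (FinCompacts α)) φ ∧
  (∀ x : α, x ∈ (φ x).1) ∧ (Set.range φ).Finite

/-- A generating family of quasi-deflations: a (nonempty) family of quasi-deflations,
directed in the pointwise reverse-inclusion order, with `⋂ i, φ i x = ↑x` for all `x`. -/
def IsGeneratingFamily [Preorder α] {I : Type v} (φ : I → α → FinCompacts α) : Prop :=
  Nonempty I ∧
  (∀ i j : I, ∃ k : I, (∀ x, (φ k x).1 ⊆ (φ i x).1) ∧ (∀ x, (φ k x).1 ⊆ (φ j x).1)) ∧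
  (∀ i, IsQuasiDeflation (φ i)) ∧
  (∀ x : α, (⋂ i, (φ i x).1) = Set.Ici x)

/-- A QRB-domain: a pointed dcpo with a generating family of quasi-deflations. -/
def IsQRBDomain (α : Type u) [PartialOrder α] : Prop :=
  IsDcpo α ∧ (∃ b : α, ∀ x, b ≤ x) ∧
  ∃ (I : Type u) (φ : I → α → FinCompacts α), IsGeneratingFamily φ

/-- An ωQRB-domain: a pointed dcpo with a countable generating family of
quasi-deflations. -/
def IsOmegaQRBDomain (α : Type u) [PartialOrder α] : Prop :=
  IsDcpo α ∧ (∃ b : α, ∀ x, b ≤ x) ∧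
  ∃ (I : Type u), Countable I ∧
    ∃ φ : I → α → FinCompacts α, IsGeneratingFamily φ

/-- A deflation on a pointed dcpo: a Scott-continuous map below the identity, with
finite image. -/
def IsDeflation [Preorder α] (f : α → α) : Prop :=
  @Continuous α α (scottTop α) (scottTop α) f ∧ (∀ x, f x ≤ x) ∧ (Set.range f).Finite

/-- An RB-domain: a pointed dcpo with a directed family of deflations whose pointwise
least upper bound is the identity. -/
def IsRBDomain (α : Type u) [PartialOrder α] : Prop :=
  IsDcpo α ∧ (∃ b : α, ∀ x, b ≤ x) ∧
  ∃ (I : Type u) (f : I → α → α), Nonempty I ∧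
    (∀ i j : I, ∃ k : I, (∀ x, f i x ≤ f k x) ∧ (∀ x, f j x ≤ f k x)) ∧
    (∀ i, IsDeflation (f i)) ∧
    ∀ x : α, IsLUB (Set.range fun i => f i x) x

/-- An ωB-domain (SFP-domain): a pointed dcpo with a non-decreasing sequence of
idempotent deflations whose pointwise least upper bound is the identity. -/
def IsOmegaBDomain (α : Type u) [PartialOrder α] : Prop :=
  IsDcpo α ∧ (∃ b : α, ∀ x, b ≤ x) ∧
  ∃ f : ℕ → α → α,
    (∀ i, IsDeflation (f i)) ∧
    (∀ i, ∀ x, f i (f i x) = f i x) ∧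
    (∀ i j : ℕ, i ≤ j → ∀ x, f i x ≤ f j x) ∧
    ∀ x : α, IsLUB (Set.range fun i => f i x) x

/-- A map finitely separated from the identity. -/
def IsFinitelySeparated [Preorder α] (f : α → α) : Prop :=
  ∃ M : Set α, M.Finite ∧ ∀ x : α, ∃ m ∈ M, f x ≤ m ∧ m ≤ x

/-- An FS-domain: a pointed dcpo with a directed family of continuous maps, each
finitely separated from the identity, whose pointwise least upper bound is the
identity. -/
def IsFSDomain (α : Type u) [PartialOrder α] : Prop :=
  IsDcpo α ∧ (∃ b : α, ∀ x, b ≤ x) ∧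
  ∃ (I : Type u) (f : I → α → α), Nonempty I ∧
    (∀ i j : I, ∃ k : I, (∀ x, f i x ≤ f k x) ∧ (∀ x, f j x ≤ f k x)) ∧
    (∀ i, @Continuous α α (scottTop α) (scottTop α) (f i) ∧ IsFinitelySeparated (f i)) ∧
    ∀ x : α, IsLUB (Set.range fun i => f i x) x

/-- A controlled QRB-domain: a pointed dcpo with a directed family of controlled
quasi-deflations `(f i, φ i)` (i.e. `φ i x ⊆ ↑(f i x)`) with `x = sup_i f i x`. -/
def IsControlledQRBDomain (α : Type u) [PartialOrder α] : Prop :=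
  IsDcpo α ∧ (∃ b : α, ∀ x, b ≤ x) ∧
  ∃ (I : Type u) (f : I → α → α) (φ : I → α → FinCompacts α), Nonempty I ∧
    (∀ i j : I, ∃ k : I,
      ((∀ x, f i x ≤ f k x) ∧ ∀ x, (φ k x).1 ⊆ (φ i x).1) ∧
      ((∀ x, f j x ≤ f k x) ∧ ∀ x, (φ k x).1 ⊆ (φ j x).1)) ∧
    (∀ i, @Continuous α α (scottTop α) (scottTop α) (f i) ∧ IsQuasiDeflation (φ i) ∧
      ∀ x, (φ i x).1 ⊆ Set.Ici (f i x)) ∧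
    ∀ x : α, IsLUB (Set.range fun i => f i x) x

/-- A continuous dcpo: for every `x`, the set of elements way-below `x` is
(nonempty and) directed and has `x` as least upper bound. -/
def IsContinuousDcpo (α : Type u) [Preorder α] : Prop :=
  IsDcpo α ∧ ∀ x : α,
    {y : α | approxes (Set.Ici y) x}.Nonempty ∧
    DirectedOn (· ≤ ·) {y : α | approxes (Set.Ici y) x} ∧
    IsLUB {y : α | approxes (Set.Ici y) x} x

/-- The finitary compacts `↑E` (E finite nonempty) that approximate `x`. -/
def finUpsBelow [Preorder α] (x : α) : Set (Set α) :=
  {A | (∃ E : Set α, E.Finite ∧ E.Nonempty ∧ A = upClos E) ∧ approxes A x}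

/-- A quasi-continuous dcpo. -/
def IsQuasiContinuous (α : Type u) [Preorder α] : Prop :=
  IsDcpo α ∧ ∀ x : α,
    (finUpsBelow x).Nonempty ∧
    DirectedOn (fun A B : Set α => B ⊆ A) (finUpsBelow x) ∧
    ⋂₀ finUpsBelow x = Set.Ici x

/-- The upper Vietoris topology on `Fin(α)` (the subspace topology induced from the
Smyth powerspace of `α` with its Scott topology), generated by the sets
`◻U = {↑E | ↑E ⊆ U}` for `U` Scott-open. -/
def finUpperVietoris (α : Type u) [Preorder α] : TopologicalSpace (FinCompacts α) :=
  TopologicalSpace.generateFrom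
    {S | ∃ U : Set α, ScottOpen U ∧ S = {A : FinCompacts α | A.1 ⊆ U}}

end ScottTopology

section Spaces

variable {X : Type u} {Y : Type v}

/-- The specialization preorder of a topological space: `x ≤ y` iff every open set
containing `x` contains `y`. -/
def specLE [TopologicalSpace X] (x y : X) : Prop :=
  ∀ U : Set X, IsOpen U → x ∈ U → y ∈ U

/-- `↑x` in the specialization preorder. -/
def specUp [TopologicalSpace X] (x : X) : Set X := {y | specLE x y}

/-- Upward closure of a set in the specialization preorder. -/
def specUpSet [TopologicalSpace X] (A : Set X) : Set X := {y | ∃ a ∈ A, specLE a y}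

/-- Downward closure of a set in the specialization preorder. -/
def specDownSet [TopologicalSpace X] (A : Set X) : Set X := {x | ∃ a ∈ A, specLE x a}

/-- A saturated set: one that is upward closed in the specialization preorder. -/
def IsSaturatedSet [TopologicalSpace X] (A : Set X) : Prop :=
  ∀ x ∈ A, ∀ y : X, specLE x y → y ∈ A

/-- A coherent space: the intersection of any two compact saturated subsets is
compact. -/
def IsCoherent (X : Type u) [TopologicalSpace X] : Prop :=
  ∀ Q₁ Q₂ : Set X, IsCompact Q₁ → IsSaturatedSet Q₁ → IsCompact Q₂ → IsSaturatedSet Q₂ →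
    IsCompact (Q₁ ∩ Q₂)

/-- A stably compact space: T0, compact, locally compact, sober and coherent. -/
def IsStablyCompact (X : Type u) [TopologicalSpace X] : Prop :=
  T0Space X ∧ CompactSpace X ∧ LocallyCompactSpace X ∧ QuasiSober X ∧ IsCoherent X

/-- A proper map: continuous, the downward closure of the image of any closed set is
closed, and the preimage of `↑y` is compact for every `y`. -/
def PaperProper [TopologicalSpace X] [TopologicalSpace Y] (r : X → Y) : Prop :=
  Continuous r ∧
  (∀ F : Set X, IsClosed F → IsClosed (specDownSet (r '' F))) ∧
  ∀ y : Y, IsCompact (r ⁻¹' specUp y)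

/-- The Smyth powerspace: nonempty compact saturated subsets. -/
def SmythP (X : Type u) [TopologicalSpace X] : Type u :=
  {Q : Set X // Q.Nonempty ∧ IsCompact Q ∧ IsSaturatedSet Q}

/-- The upper Vietoris topology on the Smyth powerspace, generated by the sets
`◻U = {Q | Q ⊆ U}`, `U` open. -/
instance SmythP.instTopologicalSpace [TopologicalSpace X] : TopologicalSpace (SmythP X) :=
  TopologicalSpace.generateFrom
    {S | ∃ U : Set X, IsOpen U ∧ S = {Q : SmythP X | Q.1 ⊆ U}}

/-- The order on the Smyth powerspace: reverse inclusion. -/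
instance SmythP.instPartialOrder [TopologicalSpace X] : PartialOrder (SmythP X) where
  le Q Q' := Q'.1 ⊆ Q.1
  le_refl Q := subset_rfl
  le_trans Q Q' Q'' h1 h2 := subset_trans h2 h1
  le_antisymm Q Q' h1 h2 := Subtype.ext (subset_antisymm h2 h1)

/-- A quasi-retraction `r : X → Y`: a continuous map admitting a continuous
quasi-section `ς : Y → S_V(X)` with `↑{r x | x ∈ ς y} = ↑y` for every `y`. -/
def IsQuasiRetraction [TopologicalSpace X] [TopologicalSpace Y] (r : X → Y) : Prop :=
  Continuous r ∧
  ∃ ς : Y → SmythP X, Continuous ς ∧ ∀ y : Y, specUpSet (r '' (ς y).1) = specUp y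

/-- The specialization ordering of a T0 space, as a partial order. -/
def specOrder (X : Type u) [TopologicalSpace X] [T0Space X] : PartialOrder X where
  le := specLE
  le_refl x := fun _ _ h => h
  le_trans x y z h1 h2 := fun U hU hx => h2 U hU (h1 U hU hx)
  le_antisymm x y h1 h2 :=
    (inseparable_iff_forall_isOpen.mpr fun U hU => ⟨h1 U hU, h2 U hU⟩).eq

/-- A continuous probability valuation on a topological space: a map from opens to
nonnegative reals that is strict, monotone, modular, continuous (preserves directed
suprema of opens) and normalized. -/
structure IsProbValuation [TopologicalSpace X] (ν : Opens X → NNReal) : Prop where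
  empty : ν ⊥ = 0
  mono : ∀ U V : Opens X, U ≤ V → ν U ≤ ν V
  modular : ∀ U V : Opens X, ν (U ⊔ V) + ν (U ⊓ V) = ν U + ν V
  scont : ∀ S : Set (Opens X), S.Nonempty → DirectedOn (· ≤ ·) S →
    ν (sSup S) = ⨆ U ∈ S, ν U
  total : ν ⊤ = 1

/-- `V_1(X)`: the probability valuations on `X`, ordered pointwise. -/
abbrev ProbVal (X : Type u) [TopologicalSpace X] : Type u :=
  {ν : Opens X → NNReal // IsProbValuation ν}

/-- The weak topology on `V_1(X)`, generated by the sets `[U > a]`. -/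
def weakTop (X : Type u) [TopologicalSpace X] : TopologicalSpace (ProbVal X) :=
  TopologicalSpace.generateFrom
    {S | ∃ (U : Opens X) (a : ℝ), S = {ν : ProbVal X | a < (ν.1 U : ℝ)}}

/-- `ν†(Q) = inf {ν U | U open, Q ⊆ U}`. -/
noncomputable def dagVal [TopologicalSpace X] (ν : Opens X → NNReal) (Q : Set X) :
    NNReal :=
  ⨅ U : {U : Opens X // Q ⊆ U.1}, ν U.1

end Spaces

section Paths

variable {Y : Type u}

/-- A path in a pointed poset: a finite covering chain starting at the least
element. -/
def IsPathIn [PartialOrder Y] (bot : Y) (S : Set Y) : Prop :=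
  ∃ (n : ℕ) (c : Fin (n + 1) → Y), c 0 = bot ∧
    (∀ i : Fin n, c i.castSucc ⋖ c i.succ) ∧ S = Set.range c

/-- The path space `Π(Y)` of a pointed poset, ordered by inclusion. -/
abbrev PathSpace (Y : Type u) [PartialOrder Y] (bot : Y) : Type u :=
  {S : Set Y // IsPathIn bot S}

end Paths

section QRB

variable {X : Type u} [PartialOrder X]

/-! ### Scott-open sets and finitary compacts -/

theorem scottOpen_not_le {α : Type u} [Preorder α] (a : α) : ScottOpen {x : α | ¬ x ≤ a} := by
  refine ⟨fun x y hxy hx hy => hx (hxy.trans hy), fun d _ _ b hb hba => ?_⟩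
  by_contra hne
  refine hba (hb.2 fun x hx => ?_)
  by_contra hxa
  exact hne ⟨x, hx, hxa⟩

theorem IsFinitaryCompact.isUpperSet {A : Set X} (hA : IsFinitaryCompact A) : IsUpperSet A := by
  obtain ⟨E, -, -, rfl⟩ := hA
  rintro x y hxy ⟨e, he, hex⟩
  exact ⟨e, he, hex.trans hxy⟩

theorem IsFinitaryCompact.isCompact {A : Set X} (hA : IsFinitaryCompact A) :
    @IsCompact X (scottTop X) A := by
  let : TopologicalSpace X := scottTop X
  obtain ⟨E, hE, -, rfl⟩ := hA
  refine isCompact_of_finite_subcover fun {ι} U hU hcov => ?_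
  obtain ⟨t, ht⟩ := hE.isCompact.elim_finite_subcover U hU
    (fun e he => hcov ⟨e, he, le_rfl⟩)
  refine ⟨t, ?_⟩
  rintro x ⟨e, he, hex⟩
  obtain ⟨i, hi, hei⟩ := mem_iUnion₂.1 (ht he)
  exact mem_iUnion₂.2 ⟨i, hi, (hU i).1 hex hei⟩

theorem IsFinitaryCompact.biUnion {ι : Type*} {F : ι → Set X} {s : Set ι} (hs : s.Nonempty)
    (hfin : (F '' s).Finite) (hF : ∀ i ∈ s, IsFinitaryCompact (F i)) :
    IsFinitaryCompact (⋃ i ∈ s, F i) := by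
  obtain ⟨i₀, hi₀⟩ := hs
  choose! E hEfin hEne hE using
    show ∀ A ∈ F '' s, ∃ E : Set X, E.Finite ∧ E.Nonempty ∧ A = upClos E by
      rintro _ ⟨i, hi, rfl⟩; exact hF i hi
  refine ⟨⋃ A ∈ F '' s, E A, hfin.biUnion hEfin, ?_, ?_⟩
  · obtain ⟨e, he⟩ := hEne _ (mem_image_of_mem F hi₀)
    exact ⟨e, mem_iUnion₂.2 ⟨_, mem_image_of_mem F hi₀, he⟩⟩
  · ext x
    constructor
    · intro hx
      obtain ⟨i, hi, hxi⟩ := mem_iUnion₂.1 hx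
      rw [hE _ (mem_image_of_mem F hi)] at hxi
      obtain ⟨e, he, hex⟩ := hxi
      exact ⟨e, mem_iUnion₂.2 ⟨_, mem_image_of_mem F hi, he⟩, hex⟩
    · rintro ⟨e, he, hex⟩
      obtain ⟨A, ⟨i, hi, rfl⟩, heA⟩ := mem_iUnion₂.1 he
      refine mem_iUnion₂.2 ⟨i, hi, ?_⟩
      rw [hE _ (mem_image_of_mem F hi)]
      exact ⟨e, heA, hex⟩

/-! ### Rudin's lemma -/

/-- Rudin's lemma, in its well-filteredness form: a minimal lower set among those that miss `U`
and meet every `A i` is directed, so its supremum lies in every `A i` but not in `U`. -/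
theorem rudin (hX : IsDcpo X) {I : Type*} [Nonempty I] (A : I → Set X)
    (hA : ∀ i, IsFinitaryCompact (A i)) (hdir : ∀ i j, ∃ k, A k ⊆ A i ∧ A k ⊆ A j)
    {U : Set X} (hU : ScottOpen U) (hAU : ⋂ i, A i ⊆ U) : ∃ i, A i ⊆ U := by
  by_contra! hne
  obtain ⟨L, -, hL⟩ := zorn_superset_nonempty
    {L : Set X | IsLowerSet L ∧ L ⊆ Uᶜ ∧ ∀ i, (L ∩ A i).Nonempty}
    (by
      intro c hc hchain hcne
      refine ⟨⋂₀ c, ⟨isLowerSet_sInter fun s hs => (hc hs).1, ?_, fun i => ?_⟩,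
        fun s hs => sInter_subset_of_mem hs⟩
      · obtain ⟨s, hs⟩ := hcne
        exact (sInter_subset_of_mem hs).trans (hc hs).2.1
      -- If every generator of `A i` is missed by a member of the chain, then the smallest
      -- of these finitely many members misses `A i`.
      · obtain ⟨E, hEfin, hEne, hE⟩ := hA i
        by_contra hemp
        have hmiss : ∀ e ∈ E, ∃ s ∈ c, e ∉ s := by
          intro e he
          by_contra! hall
          exact hemp ⟨e, mem_sInter.2 hall, hE ▸ ⟨e, he, le_rfl⟩⟩
        choose! s hsc hes using hmiss
        obtain ⟨e₀, he₀, hmin⟩ := hEfin.exists_minimalFor s E hEne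
        obtain ⟨x, hx, hxA⟩ := (hc (hsc e₀ he₀)).2.2 i
        rw [hE] at hxA
        obtain ⟨e, he, hex⟩ := hxA
        have hsub : s e₀ ⊆ s e := by
          rcases hchain.total (hsc e₀ he₀) (hsc e he) with h | h
          · exact h
          · exact hmin he h
        exact hes e he (hsub ((hc (hsc e₀ he₀)).1 hex hx)))
    Uᶜ
    ⟨hU.1.compl, subset_rfl, fun i => by
      obtain ⟨x, hx, hxU⟩ := not_subset.1 (hne i)
      exact ⟨x, hxU, hx⟩⟩
  obtain ⟨⟨hlow, hLU, hmeet⟩, hmin⟩ := hL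
  -- By minimality, removing `↑x` from `L` makes it miss some `A i`.
  have key : ∀ x ∈ L, ∃ i, ∀ z ∈ L, z ∈ A i → x ≤ z := by
    intro x hx
    by_contra! hcon
    have hmem : L \ Ici x ∈
        {L : Set X | IsLowerSet L ∧ L ⊆ Uᶜ ∧ ∀ i, (L ∩ A i).Nonempty} := by
      refine ⟨fun a b hba ha => ⟨hlow hba ha.1, fun hxb => ha.2 (le_trans hxb hba)⟩,
        sdiff_subset.trans hLU, fun i => ?_⟩
      obtain ⟨z, hz, hzA, hxz⟩ := hcon i
      exact ⟨z, ⟨hz, hxz⟩, hzA⟩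
    exact (hmin hmem sdiff_subset hx).2 le_rfl
  have hLdir : DirectedOn (· ≤ ·) L := by
    intro x hx y hy
    obtain ⟨i, hi⟩ := key x hx
    obtain ⟨j, hj⟩ := key y hy
    obtain ⟨k, hki, hkj⟩ := hdir i j
    obtain ⟨z, hz, hzA⟩ := hmeet k
    exact ⟨z, hz, hi z hz (hki hzA), hj z hz (hkj hzA)⟩
  have hLne : L.Nonempty := (hmeet (Classical.arbitrary I)).mono inter_subset_left
  obtain ⟨a, ha⟩ := hX L hLne hLdir
  have haA : a ∈ ⋂ i, A i := mem_iInter.2 fun i => by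
    obtain ⟨z, hz, hzA⟩ := hmeet i
    exact (hA i).isUpperSet (ha.1 hz) hzA
  obtain ⟨z, hz, hzU⟩ := hU.2 L hLne hLdir a ha (hAU haA)
  exact hLU hz hzU

/-! ### Quasi-deflations -/

theorem IsQuasiDeflation.anti {φ : X → FinCompacts X} (hφ : IsQuasiDeflation φ) {x y : X}
    (hxy : x ≤ y) : (φ y).1 ⊆ (φ x).1 := by
  have hopen : ScottOpen (φ ⁻¹' {B | ¬ B ≤ φ y}) := (@continuous_def _ _ (scottTop X) (scottTop (FinCompacts X)) φ).1 hφ.1 _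
      (scottOpen_not_le (φ y))
  by_contra hcon
  exact hopen.1 hxy (show x ∈ φ ⁻¹' {B | ¬ B ≤ φ y} from hcon) le_rfl

/-- Because `φ` has finite image, its values along a directed set are eventually constant, and by
continuity that constant is the value at the supremum. -/
theorem IsQuasiDeflation.scottOpen_subset {φ : X → FinCompacts X} (hφ : IsQuasiDeflation φ)
    (A : Set X) : ScottOpen {x | (φ x).1 ⊆ A} := by
  refine ⟨fun x y hxy hx => (hφ.anti hxy).trans hx, fun d hd hdir a ha haA => ?_⟩
  obtain ⟨_, ⟨z, hz, rfl⟩, hzmax⟩ :=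
    (hφ.2.2.subset (image_subset_range φ d)).exists_maximal (hd.image φ)
  have hopen : ScottOpen (φ ⁻¹' {B | ¬ B ≤ φ z}) := (@continuous_def _ _ (scottTop X) (scottTop (FinCompacts X)) φ).1 hφ.1 _
      (scottOpen_not_le (φ z))
  refine ⟨z, hz, ?_⟩
  have hle : φ a ≤ φ z := by
    by_contra hcon
    obtain ⟨w, hw, hwz⟩ := hopen.2 d hd hdir a ha hcon
    obtain ⟨v, hv, hwv, hzv⟩ := hdir w hw z hz
    exact hwz (le_trans (show φ w ≤ φ v from hφ.anti hwv)
      (hzmax (mem_image_of_mem φ hv) (show φ z ≤ φ v from hφ.anti hzv)))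
  exact Subset.trans hle haA

/-! ### Local compactness -/

theorem QRB_exists_subset (hX : IsDcpo X) {I : Type v} {φ : I → X → FinCompacts X}
    (hφ : IsGeneratingFamily φ) {x : X} {U : Set X} (hU : ScottOpen U) (hx : x ∈ U) :
    ∃ i, (φ i x).1 ⊆ U := by
  obtain ⟨hne, hdir, -, hgen⟩ := hφ
  refine rudin hX (fun i => (φ i x).1) (fun i => (φ i x).2) (fun i j => ?_) hU ?_
  · obtain ⟨k, hki, hkj⟩ := hdir i j
    exact ⟨k, hki x, hkj x⟩
  · rw [hgen x]
    exact fun y hy => hU.1 hy hx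

theorem QRB_locallyCompact (hX : IsDcpo X) {I : Type v} {φ : I → X → FinCompacts X}
    (hφ : IsGeneratingFamily φ) : @LocallyCompactSpace X (scottTop X) := by
  let : TopologicalSpace X := scottTop X
  refine ⟨fun x n hn => ?_⟩
  obtain ⟨U, hUn, hU, hxU⟩ := mem_nhds_iff.1 hn
  obtain ⟨i, hi⟩ := QRB_exists_subset hX hφ hU hxU
  have hd := hφ.2.2.1 i
  exact ⟨(φ i x).1, mem_nhds_iff.2 ⟨{y | (φ i y).1 ⊆ (φ i x).1}, fun y hy => hy (hd.2.1 y),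
    hd.scottOpen_subset _, Subset.rfl⟩, hi.trans hUn, (φ i x).2.isCompact⟩

/-! ### Sobriety -/

theorem QRB_quasiSober (hX : IsDcpo X) {I : Type v} {φ : I → X → FinCompacts X}
    (hφ : IsGeneratingFamily φ) : @QuasiSober X (scottTop X) := by
  let : TopologicalSpace X := scottTop X
  refine ⟨fun {C} hirr hC => ?_⟩
  have hmin : ∀ i, ∃ y ∈ C, ∀ x ∈ C, (φ i y).1 ⊆ (φ i x).1 := by
    intro i
    have hd := hφ.2.2.1 i
    have hfin : ((φ i) '' C).Finite := hd.2.2.subset (image_subset_range _ _)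
    -- The finitely many open sets `{y | φ i y ⊆ A}`, `A ∈ φ i '' C`, all meet `C`, so they have
    -- a common point in `C`.
    obtain ⟨y, hyC, hy⟩ := (isIrreducible_iff_sInter.1 hirr)
      (hfin.toFinset.image fun A : FinCompacts X => {y | (φ i y).1 ⊆ A.1})
      (by
        intro u hu
        obtain ⟨A, -, rfl⟩ := Finset.mem_image.1 hu
        exact hd.scottOpen_subset _)
      (by
        intro u hu
        obtain ⟨A, hA, rfl⟩ := Finset.mem_image.1 hu
        obtain ⟨x, hx, rfl⟩ := hfin.mem_toFinset.1 hA
        exact ⟨x, hx, Subset.rfl⟩)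
    refine ⟨y, hyC, fun x hx => ?_⟩
    exact mem_sInter.1 hy _ (Finset.mem_coe.2 (Finset.mem_image.2
      ⟨φ i x, hfin.mem_toFinset.2 (mem_image_of_mem _ hx), rfl⟩))
  choose y hyC hy using hmin
  have hne : Nonempty I := hφ.1
  have hCo : ScottOpen Cᶜ := hC.isOpen_compl
  have hex : ∃ c ∈ ⋂ i, (φ i (y i)).1, c ∈ C := by
    by_contra! hcon
    obtain ⟨i, hi⟩ := rudin hX (fun i => (φ i (y i)).1) (fun i => (φ i (y i)).2)
      (fun i j => by
        obtain ⟨k, hki, hkj⟩ := hφ.2.1 i j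
        exact ⟨k, (hy k _ (hyC i)).trans (hki _), (hy k _ (hyC j)).trans (hkj _)⟩)
      hCo hcon
    exact hi ((hφ.2.2.1 i).2.1 (y i)) (hyC i)
  obtain ⟨c, hc, hcC⟩ := hex
  refine ⟨c, Subset.antisymm (hC.closure_subset_iff.2 (singleton_subset_iff.2 hcC)) ?_⟩
  intro x hx
  have hxc : x ≤ c := by
    have hmem : c ∈ ⋂ i, (φ i x).1 := mem_iInter.2 fun i => hy i x hx (mem_iInter.1 hc i)
    rwa [hφ.2.2.2 x] at hmem
  refine mem_closure_iff.2 fun o ho hxo => ⟨c, ?_, rfl⟩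
  have ho' : ScottOpen o := ho
  exact ho'.1 hxc hxo

/-! ### Coherence -/

/-- A compact saturated set `Q` is the intersection of the sets `⋃ x ∈ Q, φ i x`: a point outside
`Q` already lies outside one of them. -/
theorem QRB_exists_notMem {I : Type v} {φ : I → X → FinCompacts X}
    (hφ : IsGeneratingFamily φ) {Q : Set X} (hQ : @IsCompact X (scottTop X) Q)
    (hup : IsUpperSet Q) {z : X} (hz : z ∉ Q) : ∃ i, ∀ x ∈ Q, z ∉ (φ i x).1 := by
  let : TopologicalSpace X := scottTop X
  have hne : Nonempty I := hφ.1
  obtain ⟨t, ht⟩ := hQ.elim_directed_cover (fun i => {x | (φ i x).1 ⊆ {z}ᶜ})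
    (fun i => (hφ.2.2.1 i).scottOpen_subset _)
    (fun x hx => by
      by_contra hcon
      have hmem : z ∈ ⋂ i, (φ i x).1 := by
        refine mem_iInter.2 fun i => ?_
        by_contra hzi
        exact hcon (mem_iUnion.2 ⟨i, subset_compl_singleton_iff.2 hzi⟩)
      rw [hφ.2.2.2 x] at hmem
      exact hz (hup hmem hx))
    (fun i j => by
      obtain ⟨k, hki, hkj⟩ := hφ.2.1 i j
      exact ⟨k, fun x hx => (hki x).trans hx, fun x hx => (hkj x).trans hx⟩)
  exact ⟨t, fun x hx => subset_compl_singleton_iff.1 (ht hx)⟩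

theorem IsSaturatedSet.isUpperSet_scott {Q : Set X} (hQ : @IsSaturatedSet X (scottTop X) Q) :
    IsUpperSet Q :=
  fun x y hxy hx => hQ x hx y fun _ hU hxU => hU.1 hxy hxU

theorem QRB_coherent (hX : IsDcpo X) {I : Type v} {φ : I → X → FinCompacts X}
    (hφ : IsGeneratingFamily φ) : @IsCoherent X (scottTop X) := by
  let : TopologicalSpace X := scottTop X
  intro Q₁ Q₂ hQ₁ hS₁ hQ₂ hS₂
  rcases (Q₁ ∩ Q₂).eq_empty_or_nonempty with hemp | hQne
  · rw [hemp]; exact isCompact_empty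
  have hne : Nonempty I := hφ.1
  have hfc : ∀ i, IsFinitaryCompact (⋃ x ∈ Q₁ ∩ Q₂, (φ i x).1) := fun i =>
    IsFinitaryCompact.biUnion hQne
      (by
        refine ((hφ.2.2.1 i).2.2.image Subtype.val).subset ?_
        rintro _ ⟨x, -, rfl⟩
        exact mem_image_of_mem _ (mem_range_self x))
      (fun x _ => (φ i x).2)
  have hinter : ⋂ i, ⋃ x ∈ Q₁ ∩ Q₂, (φ i x).1 ⊆ Q₁ ∩ Q₂ := by
    intro z hz
    constructor
    · by_contra hzQ
      obtain ⟨i, hi⟩ := QRB_exists_notMem hφ hQ₁ hS₁.isUpperSet_scott hzQ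
      obtain ⟨x, hx, hzx⟩ := mem_iUnion₂.1 (mem_iInter.1 hz i)
      exact hi x hx.1 hzx
    · by_contra hzQ
      obtain ⟨i, hi⟩ := QRB_exists_notMem hφ hQ₂ hS₂.isUpperSet_scott hzQ
      obtain ⟨x, hx, hzx⟩ := mem_iUnion₂.1 (mem_iInter.1 hz i)
      exact hi x hx.2 hzx
  refine isCompact_of_finite_subcover fun {ι} U hU hcov => ?_
  obtain ⟨i, hi⟩ := rudin hX _ hfc
    (fun i j => by
      obtain ⟨k, hki, hkj⟩ := hφ.2.1 i j
      exact ⟨k, iUnion₂_mono fun x _ => hki x, iUnion₂_mono fun x _ => hkj x⟩)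
    (show ScottOpen (⋃ j, U j) from isOpen_iUnion hU) (hinter.trans hcov)
  obtain ⟨t, ht⟩ := (hfc i).isCompact.elim_finite_subcover U hU hi
  exact ⟨t, fun x hx => ht (mem_iUnion₂.2 ⟨x, hx, (hφ.2.2.1 i).2.1 x⟩)⟩

/-! ### Separation and compactness -/

theorem scottTop_t0 : @T0Space X (scottTop X) := by
  let : TopologicalSpace X := scottTop X
  refine ⟨fun x y hxy => ?_⟩
  have h := inseparable_iff_forall_isOpen.1 hxy
  refine le_antisymm ?_ ?_
  · by_contra hle
    exact (h _ (scottOpen_not_le y)).1 hle le_rfl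
  · by_contra hle
    exact (h _ (scottOpen_not_le x)).2 hle le_rfl

theorem scottTop_compact (hb : ∃ b : X, ∀ x, b ≤ x) : @CompactSpace X (scottTop X) := by
  let : TopologicalSpace X := scottTop X
  obtain ⟨b, hb⟩ := hb
  have huniv : (univ : Set X) = upClos {b} :=
    Subset.antisymm (fun x _ => ⟨b, rfl, hb x⟩) (subset_univ _)
  have hfc : IsFinitaryCompact (univ : Set X) :=
    ⟨{b}, finite_singleton b, singleton_nonempty b, huniv⟩
  exact ⟨hfc.isCompact⟩

end QRB

/-- Every QRB-domain, equipped with its Scott topology, is stably compact. -/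
theorem QRB_stablyCompact {X : Type u} [PartialOrder X] (hX : IsQRBDomain X) :
    letI : TopologicalSpace X := scottTop X
    IsStablyCompact X := by
  obtain ⟨hd, hb, I, φ, hφ⟩ := hX
  exact ⟨scottTop_t0, scottTop_compact hb, QRB_locallyCompact hd hφ, QRB_quasiSober hd hφ,
    QRB_coherent hd hφ⟩
end

section
/- A pointed dcpo is a controlled QRB-domain if and only if it is an FS-domain. -/
/-!
A controlled quasi-deflation `(f, φ)` is finitely separated from the identity by the set of the
chosen finite generators of the finitely many values of `φ`: since `x ∈ φ x = ↑E`, some `e ∈ E` lies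
below `x`, and `φ x ⊆ ↑(f x)` gives `f x ≤ e`.

Conversely, if `f` is separated from the identity by `M`, then for every continuous `h ≤ f` the
map `x ↦ ↑(M ∩ ↑(h x))` is a quasi-deflation controlled by `h`; its continuity rests on the
finiteness of `M` (`exists_mem_reflects`). The choice of `h` has to make these pairs directed in
the index. Put `g i = f i ∘ f i`. Each `g i` is way-below the identity
(`exists_comp_self_le`), so `g i ≤ g k ∘ g k` for some `k`, because the family
`g k ∘ g k` also has supremum the identity. Taking `h = g i ∘ g i`, any `m ∈ M k` above
`g k (g k x)` is above some `m' ∈ M i` with `g i m ≤ m'`, whence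
`g i (g i x) ≤ g i (g k (g k x)) ≤ g i m ≤ m'`, which is the required inclusion.
-/


open Set TopologicalSpace

universe u v

section Helpers

variable {α : Type u}

theorem scottOpen_compl_Iic [Preorder α] (a : α) : ScottOpen (Set.Iic a)ᶜ := by
  refine ⟨(isLowerSet_Iic a).compl, ?_⟩
  intro d _ _ b hb hba
  by_contra hne
  refine hba (hb.2 fun x hx => ?_)
  by_contra hxa
  exact hne ⟨x, hx, hxa⟩

theorem scott_continuous_iff {β : Type u} [Preorder α] [Preorder β] {f : α → β} :
    @Continuous α β (scottTop α) (scottTop β) f ↔ ∀ U, ScottOpen U → ScottOpen (f ⁻¹' U) :=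
  @continuous_def α β (scottTop α) (scottTop β) f

theorem scott_monotone [Preorder α] {f : α → α}
    (hf : @Continuous α α (scottTop α) (scottTop α) f) : Monotone f := by
  intro x y hxy
  by_contra h
  have ho : ScottOpen (f ⁻¹' (Set.Iic (f y))ᶜ) :=
    scott_continuous_iff.1 hf _ (scottOpen_compl_Iic (f y))
  exact ho.1 hxy h le_rfl

theorem scott_comp [Preorder α] {f g : α → α}
    (hf : @Continuous α α (scottTop α) (scottTop α) f)
    (hg : @Continuous α α (scottTop α) (scottTop α) g) :
    @Continuous α α (scottTop α) (scottTop α) (fun x => f (g x)) :=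
  @Continuous.comp α α α (scottTop α) (scottTop α) (scottTop α) g f hf hg

theorem exists_of_finite_directed {ι : Type*} {β : Type*} [Nonempty ι] (r : ι → ι → Prop)
    (hdir : ∀ i j, ∃ k, r i k ∧ r j k) {M : Set β} (hM : M.Finite) (P : β → ι → Prop)
    (hP : ∀ m i j, r i j → P m i → P m j) (h : ∀ m ∈ M, ∃ i, P m i) :
    ∃ i, ∀ m ∈ M, P m i := by
  induction M, hM using Set.Finite.induction_on with
  | empty => exact ⟨Classical.arbitrary ι, by simp⟩
  | @insert a s _ _ ih =>
    obtain ⟨i, hi⟩ := ih fun m hm => h m (Set.mem_insert_of_mem _ hm)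
    obtain ⟨j, hj⟩ := h a (Set.mem_insert _ _)
    obtain ⟨k, hik, hjk⟩ := hdir i j
    refine ⟨k, fun m hm => ?_⟩
    rcases hm with rfl | hm
    · exact hP _ _ _ hjk hj
    · exact hP _ _ _ hik (hi m hm)

/-- Along a directed set with supremum `a`, the set of upper bounds of `h x` inside a finite set
`M` decreases to the one of `h a`, hence equals it at some stage. -/
theorem exists_mem_reflects [Preorder α] {h : α → α}
    (hh : @Continuous α α (scottTop α) (scottTop α) h) {M : Set α} (hM : M.Finite)
    {d : Set α} (hne : d.Nonempty) (hdir : DirectedOn (· ≤ ·) d) {a : α} (ha : IsLUB d a) :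
    ∃ x ∈ d, ∀ m ∈ M, h x ≤ m → h a ≤ m := by
  have : Nonempty d := hne.to_subtype
  obtain ⟨x, hx⟩ := exists_of_finite_directed (fun x y : d => x.1 ≤ y.1)
    (fun i j => by
      obtain ⟨k, hk, h1, h2⟩ := hdir i i.2 j j.2
      exact ⟨⟨k, hk⟩, h1, h2⟩) hM (fun m x => h x.1 ≤ m → h a ≤ m)
    (fun m i j hij hi hj => hi ((scott_monotone hh hij).trans hj))
    (fun m _ => by
      by_cases hm : h a ≤ m
      · exact ⟨Classical.arbitrary d, fun _ => hm⟩
      · have ho : ScottOpen (h ⁻¹' (Set.Iic m)ᶜ) :=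
          scott_continuous_iff.1 hh _ (scottOpen_compl_Iic m)
        obtain ⟨x, hxd, hx⟩ := ho.2 d hne hdir a ha hm
        exact ⟨⟨x, hxd⟩, fun hx' => absurd hx' hx⟩)
  exact ⟨x.1, x.2, hx⟩

theorem le_of_separated [Preorder α] {f : α → α} {M : Set α}
    (hs : ∀ x, ∃ m ∈ M, f x ≤ m ∧ m ≤ x) (x : α) : f x ≤ x := by
  obtain ⟨m, _, h1, h2⟩ := hs x
  exact h1.trans h2

/-- The composite of a finitely separated continuous map with itself is way-below the identity,
with respect to directed families of monotone maps. -/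
theorem exists_comp_self_le [Preorder α] {f : α → α}
    (hf : @Continuous α α (scottTop α) (scottTop α) f) {M : Set α} (hM : M.Finite)
    (hs : ∀ x, ∃ m ∈ M, f x ≤ m ∧ m ≤ x) {I : Type*} [Nonempty I] {h : I → α → α}
    (hmono : ∀ i, Monotone (h i))
    (hdir : ∀ i j, ∃ k, (∀ x, h i x ≤ h k x) ∧ ∀ x, h j x ≤ h k x)
    (hlub : ∀ x, IsLUB (Set.range fun i => h i x) x) :
    ∃ k, ∀ x, f (f x) ≤ h k x := by
  obtain ⟨k, hk⟩ := exists_of_finite_directed (fun i j => ∀ x, h i x ≤ h j x) hdir hM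
    (fun m i => f m ≤ h i m) (fun m i j hij hi => hi.trans (hij m))
    (fun m _ => by
      obtain ⟨_, ⟨i, rfl⟩, hi⟩ := exists_mem_reflects hf hM (Set.range_nonempty _)
        (by
          rintro _ ⟨i, rfl⟩ _ ⟨j, rfl⟩
          obtain ⟨k, h1, h2⟩ := hdir i j
          exact ⟨_, ⟨k, rfl⟩, h1 m, h2 m⟩) (hlub m)
      obtain ⟨n, hn, h1, h2⟩ := hs (h i m)
      exact ⟨i, (hi n hn h1).trans h2⟩)
  refine ⟨k, fun x => ?_⟩
  obtain ⟨m, hm, h1, h2⟩ := hs x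
  exact ((scott_monotone hf h1).trans (hk m hm)).trans (hmono k h2)

theorem isLUB_comp_self [Preorder α] {I : Type*} {f : I → α → α}
    (hmono : ∀ i, Monotone (f i)) (hle : ∀ i x, f i x ≤ x)
    (hdir : ∀ i j, ∃ k, (∀ x, f i x ≤ f k x) ∧ ∀ x, f j x ≤ f k x)
    (hlub : ∀ x, IsLUB (Set.range fun i => f i x) x) (x : α) :
    IsLUB (Set.range fun i => f i (f i x)) x := by
  constructor
  · rintro _ ⟨i, rfl⟩
    exact (hle i _).trans (hle i x)
  · intro u hu
    refine (hlub x).2 ?_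
    rintro _ ⟨j, rfl⟩
    refine (hlub (f j x)).2 ?_
    rintro _ ⟨i, rfl⟩
    obtain ⟨k, h1, h2⟩ := hdir i j
    exact ((h1 _).trans (hmono k (h2 x))).trans (hu ⟨k, rfl⟩)

theorem directed_comp_self [Preorder α] {I : Type*} {f : I → α → α}
    (hmono : ∀ i, Monotone (f i))
    (hdir : ∀ i j, ∃ k, (∀ x, f i x ≤ f k x) ∧ ∀ x, f j x ≤ f k x) (i j : I) :
    ∃ k, (∀ x, f i (f i x) ≤ f k (f k x)) ∧ ∀ x, f j (f j x) ≤ f k (f k x) := by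
  obtain ⟨k, h1, h2⟩ := hdir i j
  exact ⟨k, fun x => (h1 _).trans (hmono k (h1 x)), fun x => (h2 _).trans (hmono k (h2 x))⟩

/-- The map `x ↦ ↑(M ∩ ↑(h x))`, for a finite set `M` separating `h` from the identity. -/
def sepFin [Preorder α] (M : Set α) (hM : M.Finite) (h : α → α)
    (hs : ∀ x, ∃ m ∈ M, h x ≤ m ∧ m ≤ x) (x : α) : FinCompacts α :=
  ⟨upClos (M ∩ Set.Ici (h x)), M ∩ Set.Ici (h x), hM.inter_of_left _, by
    obtain ⟨m, hm, h1, _⟩ := hs x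
    exact ⟨m, hm, h1⟩, rfl⟩

theorem sepFin_isQuasiDeflation [Preorder α] {M : Set α} (hM : M.Finite) {h : α → α}
    (hh : @Continuous α α (scottTop α) (scottTop α) h)
    (hs : ∀ x, ∃ m ∈ M, h x ≤ m ∧ m ≤ x) : IsQuasiDeflation (sepFin M hM h hs) := by
  refine ⟨scott_continuous_iff.2 fun U hU => ?_, fun x => ?_, ?_⟩
  · constructor
    · intro x y hxy hx
      refine hU.1 ?_ hx
      rintro z ⟨m, ⟨hm, hym⟩, hmz⟩
      exact ⟨m, ⟨hm, (scott_monotone hh hxy).trans hym⟩, hmz⟩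
    · intro d hne hdir a ha haU
      obtain ⟨x, hx, hxa⟩ := exists_mem_reflects hh hM hne hdir ha
      refine ⟨x, hx, hU.1 ?_ haU⟩
      rintro z ⟨m, ⟨hm, hxm⟩, hmz⟩
      exact ⟨m, ⟨hm, hxa m hm hxm⟩, hmz⟩
  · obtain ⟨m, hm, h1, h2⟩ := hs x
    exact ⟨m, ⟨hm, h1⟩, h2⟩
  · refine Set.Finite.of_finite_image (f := Subtype.val) ?_ Subtype.val_injective.injOn
    refine (hM.finite_subsets.image upClos).subset ?_
    rintro _ ⟨_, ⟨x, rfl⟩, rfl⟩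
    exact ⟨M ∩ Set.Ici (h x), Set.inter_subset_left, rfl⟩

theorem separated_of_controlled [Preorder α] {f : α → α} {φ : α → FinCompacts α}
    (hφ : IsQuasiDeflation φ) (hc : ∀ x, (φ x).1 ⊆ Set.Ici (f x)) : IsFinitelySeparated f := by
  choose E hE _ hEeq using fun A : FinCompacts α => A.2
  refine ⟨⋃ A ∈ Set.range φ, E A, hφ.2.2.biUnion fun A _ => hE A, fun x => ?_⟩
  have hx := hφ.2.1 x
  rw [hEeq] at hx
  obtain ⟨e, he, hex⟩ := hx
  refine ⟨e, Set.mem_biUnion ⟨x, rfl⟩ he, hc x ?_, hex⟩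
  rw [hEeq]
  exact ⟨e, he, le_rfl⟩

end Helpers

/-- A pointed dcpo is a controlled QRB-domain if and only if it is an FS-domain. -/
theorem controlledQRB_iff_FS {α : Type u} [PartialOrder α]
    (hd : IsDcpo α) (hb : ∃ b : α, ∀ x, b ≤ x) :
    IsControlledQRBDomain α ↔ IsFSDomain α := by
  constructor
  · rintro ⟨_, _, I, f, φ, hI, hdir, hc, hlub⟩
    refine ⟨hd, hb, I, f, hI, fun i j => ?_, fun i => ?_, hlub⟩
    · obtain ⟨k, h1, h2⟩ := hdir i j
      exact ⟨k, h1.1, h2.1⟩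
    · exact ⟨(hc i).1, separated_of_controlled (hc i).2.1 (hc i).2.2⟩
  · rintro ⟨_, _, I, f, hI, hdir, hc, hlub⟩
    choose hcont M hM hs using hc
    have hmono := fun i => scott_monotone (hcont i)
    have hle := fun i => le_of_separated (hs i)
    let g : I → α → α := fun i x => f i (f i x)
    have hgcont : ∀ i, @Continuous α α (scottTop α) (scottTop α) (g i) :=
      fun i => scott_comp (hcont i) (hcont i)
    have hgmono := fun i => scott_monotone (hgcont i)
    have hgs : ∀ i x, ∃ m ∈ M i, g i x ≤ m ∧ m ≤ x := fun i x => by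
      obtain ⟨m, hm, h1, h2⟩ := hs i x
      exact ⟨m, hm, (hle i _).trans h1, h2⟩
    have hgle := fun i => le_of_separated (hgs i)
    have hgdir : ∀ i j, ∃ k, (∀ x, g i x ≤ g k x) ∧ ∀ x, g j x ≤ g k x :=
      directed_comp_self hmono hdir
    have hggdir := directed_comp_self hgmono hgdir
    have hgglub := isLUB_comp_self hgmono hgle hgdir (isLUB_comp_self hmono hle hdir hlub)
    have hggmono : ∀ i, Monotone fun x => g i (g i x) := fun i => (hgmono i).comp (hgmono i)
    have hggs : ∀ i x, ∃ m ∈ M i, g i (g i x) ≤ m ∧ m ≤ x := fun i x => by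
      obtain ⟨m, hm, h1, h2⟩ := hgs i x
      exact ⟨m, hm, (hgle i _).trans h1, h2⟩
    have hinterp : ∀ i, ∃ k, ∀ x, g i x ≤ g k (g k x) := fun i =>
      exists_comp_self_le (hcont i) (hM i) (hs i) hggmono hggdir hgglub
    have hggcont : ∀ i, @Continuous α α (scottTop α) (scottTop α) fun x => g i (g i x) :=
      fun i => scott_comp (hgcont i) (hgcont i)
    -- It is enough to interpolate: `g i ≤ g k ∘ g k` puts the pair of index `i` below that of `k`.
    have key : ∀ i k, (∀ x, g i x ≤ g k (g k x)) →
        (∀ x, g i (g i x) ≤ g k (g k x)) ∧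
        ∀ x, (sepFin (M k) (hM k) _ (hggs k) x).1 ⊆ (sepFin (M i) (hM i) _ (hggs i) x).1 := by
      intro i k hik
      refine ⟨fun x => (hgle i _).trans (hik x), fun x => ?_⟩
      rintro z ⟨m, ⟨_, hm⟩, hmz⟩
      obtain ⟨m', hm', h1, h2⟩ := hgs i m
      exact ⟨m', ⟨hm', (hgmono i ((hik x).trans hm)).trans h1⟩, h2.trans hmz⟩
    refine ⟨hd, hb, I, fun i x => g i (g i x), fun i => sepFin (M i) (hM i) _ (hggs i), hI,
      fun i j => ?_, fun i => ⟨hggcont i, sepFin_isQuasiDeflation (hM i) (hggcont i) (hggs i), ?_⟩,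
      hgglub⟩
    · obtain ⟨k₁, h1⟩ := hinterp i
      obtain ⟨k₂, h2⟩ := hinterp j
      obtain ⟨k, hk1, hk2⟩ := hggdir k₁ k₂
      exact ⟨k, key i k fun x => (h1 x).trans (hk1 x), key j k fun x => (h2 x).trans (hk2 x)⟩
    · rintro x z ⟨m, ⟨_, hm⟩, hmz⟩
      exact le_trans hm hmz
end

section
/- For every finite tree T, the dcpo V_1(T) of continuous probability valuations on T (ordered pointwise) is a countably-based bc-domain: it is a pointed continuous dcpo in which every pair of elements with an upper bound has a least upper bound, and its Scott topology has a countable base. -/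
/-!
Since `T` is finite, so is its lattice of opens, and a probability valuation is just a strict,
modular, monotone, normalized vector of finitely many numbers (`isProbValuation_of_finite`).

*Continuity and countable base.* Directed suprema are pointwise (`exists_isLUB_eval`). Let `b` be
the root; the only open set containing it is `T`. For `a < 1` the valuation `a x + (1 - a) δ_b`
(`shrink`) is strictly below `x` at every proper open where it is nonzero. Because only finitely
many opens have to be tested, the set `strictAbove y` of valuations exceeding `y` at each such open
is Scott-open; it lies in `↑y`. Hence the chain of all `a x + (1 - a) δ_b`, whose supremum is `x`,
consists of elements way below `x`, which gives continuity. The same sets show that the Scott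
topology is generated by the sets `{ν | q < ν U}` with `q` rational, a countable family.

*Bounded suprema.* This is where the tree structure enters. An upper set `U` of a tree is the
disjoint union of the cones `↑t`, `t` minimal in `U`, so a valuation is determined by its values
on cones, and so is the order between valuations. Given a bounded pair, put
`F t = inf {μ (↑t) | μ an upper bound}` and `s U = ∑ F t` over the minimal elements `t` of `U`.
Modularity of `s` holds because two upper sets are comparable by inclusion once restricted to the
chain `↓t`. Monotonicity holds because every upper bound `μ` satisfies
`∑ μ (↑t) ≤ μ (↑v)` for `t` ranging over an antichain above `v`, an inequality inherited by
infima. So `s` is a probability valuation, and it is the least upper bound.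
-/

open Set TopologicalSpace

universe u v

/-! ### Probability valuations on a space with finitely many points -/

section FiniteSpace

open scoped Topology

variable {T : Type u} [TopologicalSpace T]

instance Opens.finite_of_finite [Finite T] : Finite (Opens T) :=
  Finite.of_injective (fun U : Opens T => (U : Set T)) SetLike.coe_injective

/-- On a finite space the continuity axiom is automatic: a directed family of opens contains its
supremum. -/
theorem isProbValuation_of_finite [Finite T] {ν : Opens T → NNReal} (h0 : ν ⊥ = 0)
    (hm : ∀ U V : Opens T, U ≤ V → ν U ≤ ν V)
    (hmod : ∀ U V : Opens T, ν (U ⊔ V) + ν (U ⊓ V) = ν U + ν V)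
    (h1 : ν ⊤ = 1) : IsProbValuation ν where
  empty := h0
  mono := hm
  modular := hmod
  total := h1
  scont := by
    intro S hS hd
    obtain ⟨m, hm'⟩ := S.toFinite.exists_maximal hS
    have htop : ∀ U ∈ S, U ≤ m := by
      intro U hU
      obtain ⟨z, hz, h1, h2⟩ := hd m hm'.1 U hU
      exact h2.trans (hm'.2 hz h1)
    have hs : sSup S = m := le_antisymm (sSup_le htop) (le_sSup hm'.1)
    rw [hs]
    apply le_antisymm
    · refine le_ciSup_of_le (Set.finite_range _).bddAbove m ?_
      rw [ciSup_pos hm'.1]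
    · exact ciSup_le' fun U => ciSup_le' fun hU => hm _ _ (htop U hU)

theorem ProbVal.le_one (ν : ProbVal T) (U : Opens T) : ν.1 U ≤ 1 := by
  rw [← ν.2.total]; exact ν.2.mono _ _ le_top

theorem exists_isLUB_eval [Finite T] (d : Set (ProbVal T)) (hne : d.Nonempty)
    (hd : DirectedOn (· ≤ ·) d) :
    ∃ s : ProbVal T, IsLUB d s ∧ ∀ U, s.1 U = ⨆ ν : d, ν.1.1 U := by
  have hbdd : ∀ U : Opens T, BddAbove (Set.range fun ν : d => ν.1.1 U) := by
    intro U
    refine ⟨1, ?_⟩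
    rintro _ ⟨ν, rfl⟩
    exact ν.1.le_one U
  have : Nonempty d := hne.to_subtype
  have : IsDirectedOrder d := ⟨fun x y => by
    obtain ⟨z, hz, h1, h2⟩ := hd x.1 x.2 y.1 y.2
    exact ⟨⟨z, hz⟩, h1, h2⟩⟩
  have hlim : ∀ U : Opens T, Filter.Tendsto (fun ν : d => ν.1.1 U) Filter.atTop
      (nhds (⨆ ν : d, ν.1.1 U)) := fun U =>
    tendsto_atTop_ciSup (fun x y hxy => hxy U) (hbdd U)
  have hprob : IsProbValuation fun U : Opens T => ⨆ ν : d, ν.1.1 U := by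
    apply isProbValuation_of_finite
    · exact (iSup_congr fun ν : d => ν.1.2.empty).trans ciSup_const
    · exact fun U V hUV => ciSup_mono (hbdd V) fun ν => ν.1.2.mono _ _ hUV
    · intro U V
      refine tendsto_nhds_unique ((hlim _).add (hlim _)) ?_
      refine ((hlim U).add (hlim V)).congr fun ν => (ν.1.2.modular U V).symm
    · exact (iSup_congr fun ν : d => ν.1.2.total).trans ciSup_const
  refine ⟨⟨_, hprob⟩, ⟨?_, ?_⟩, fun U => rfl⟩
  · exact fun ν hν U => le_ciSup (hbdd U) ⟨ν, hν⟩
  · exact fun μ hμ U => ciSup_le fun ν => hμ ν.2 U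

theorem exists_lt_eval_of_isLUB [Finite T] {d : Set (ProbVal T)} (hne : d.Nonempty)
    (hd : DirectedOn (· ≤ ·) d) {x : ProbVal T} (hx : IsLUB d x) {U : Opens T} {c : NNReal}
    (hc : c < x.1 U) : ∃ ν ∈ d, c < ν.1 U := by
  obtain ⟨s, hs, hsU⟩ := exists_isLUB_eval d hne hd
  obtain rfl := hs.unique hx
  rw [hsU] at hc
  have : Nonempty d := hne.to_subtype
  obtain ⟨ν, hν⟩ := exists_lt_of_lt_ciSup hc
  exact ⟨ν.1, ν.2, hν⟩

theorem scottOpen_lt_eval [Finite T] (U : Opens T) (c : NNReal) :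
    ScottOpen {G : ProbVal T | c < G.1 U} :=
  ⟨fun _ _ h hx => lt_of_lt_of_le hx (h U), fun _ hne hd _ hx hc =>
    exists_lt_eval_of_isLUB hne hd hx hc⟩

/-- The valuations strictly larger than `y` at every proper open where `y` does not vanish. -/
def strictAbove (y : ProbVal T) : Set (ProbVal T) :=
  {G | ∀ U : Opens T, U ≠ ⊤ → y.1 U ≠ 0 → y.1 U < G.1 U}

theorem strictAbove_subset_Ici (y : ProbVal T) : strictAbove y ⊆ Set.Ici y := by
  intro G hG U
  by_cases hU : U = ⊤
  · rw [hU, y.2.total, G.2.total]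
  by_cases h0 : y.1 U = 0
  · rw [h0]; exact zero_le
  · exact (hG U hU h0).le

/-- A formulation for an arbitrary topology, applicable both to the Scott topology and to the one
generated by rational evaluation conditions. -/
theorem isOpen_strictAbove [Finite T] (τ : TopologicalSpace (ProbVal T))
    (hτ : ∀ (U : Opens T) (c : NNReal), IsOpen[τ] {G : ProbVal T | c < G.1 U})
    (y : ProbVal T) : IsOpen[τ] (strictAbove y) := by
  have : strictAbove y = ⋂ U : {U : Opens T // U ≠ ⊤ ∧ y.1 U ≠ 0},
      {G : ProbVal T | y.1 U.1 < G.1 U.1} := by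
    ext G
    simp only [strictAbove, Set.mem_iInter, Set.mem_ofPred_eq, Subtype.forall]
    exact ⟨fun h U hU => h U hU.1 hU.2, fun h U h1 h2 => h U ⟨h1, h2⟩⟩
  rw [this]
  exact isOpen_iInter_of_finite fun U => hτ _ _

theorem scottOpen_strictAbove [Finite T] (y : ProbVal T) : ScottOpen (strictAbove y) :=
  isOpen_strictAbove (scottTop _) scottOpen_lt_eval y

theorem approxes_of_mem_strictAbove [Finite T] {x y : ProbVal T} (h : x ∈ strictAbove y) :
    approxes (Set.Ici y) x := by
  intro d hne hd a ha hxa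
  obtain ⟨z, hz, hzy⟩ := (scottOpen_strictAbove y).2 d hne hd a ha
    ((scottOpen_strictAbove y).1 hxa h)
  exact ⟨z, hz, strictAbove_subset_Ici y hzy⟩

/-! ### Continuity and the countable base -/

section Shrink

variable [Finite T] {b : T} (hb : ∀ U : Opens T, b ∈ U → U = ⊤)

include hb

open Classical in
theorem isProbValuation_shrink (x : ProbVal T) (a : NNReal) (ha : a ≤ 1) :
    IsProbValuation fun U : Opens T => if b ∈ U then 1 else a * x.1 U := by
  have hle : ∀ U, a * x.1 U ≤ 1 := fun U => mul_le_one' ha (x.le_one U)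
  apply isProbValuation_of_finite
  · rw [if_neg (by simp), x.2.empty, mul_zero]
  · intro U V hUV
    by_cases hV : b ∈ V
    · simp only [hV, if_true]
      split_ifs
      exacts [le_rfl, hle U]
    · simp only [hV, if_false, if_neg fun h => hV (hUV h)]
      exact mul_le_mul_right (x.2.mono _ _ hUV) a
  · intro U V
    by_cases hU : b ∈ U
    · rw [hb U hU]; simp
    by_cases hV : b ∈ V
    · rw [hb V hV]; simp [add_comm]
    have h1 : b ∉ U ⊔ V := by
      rw [← SetLike.mem_coe, Opens.coe_sup]
      exact fun h => h.elim hU hV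
    have h2 : b ∉ U ⊓ V := fun h => hU (inf_le_left (b := V) h)
    simp only [hU, hV, h1, h2, if_false, ← mul_add, x.2.modular]
  · simp

omit hb in
open Classical in
/-- The convex combination `a x + (1 - a) δ_b`, for `b` a point whose only open neighbourhood is
the whole space and `a < 1`. -/
noncomputable def shrink (hb : ∀ U : Opens T, b ∈ U → U = ⊤) (x : ProbVal T) (a : {a : NNReal // a < 1}) :
    ProbVal T :=
  ⟨_, isProbValuation_shrink hb x a.1 a.2.le⟩

theorem shrink_apply (x : ProbVal T) (a : {a : NNReal // a < 1}) {U : Opens T} (hU : U ≠ ⊤) :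
    (shrink hb x a).1 U = a.1 * x.1 U :=
  if_neg fun h => hU (hb U h)

theorem shrink_mono (x : ProbVal T) : Monotone (shrink hb x) := by
  intro a a' h U
  by_cases hU : U = ⊤
  · rw [hU, (shrink hb x a).2.total, (shrink hb x a').2.total]
  · rw [shrink_apply hb x a hU, shrink_apply hb x a' hU]
    exact mul_le_mul_left (Subtype.coe_le_coe.2 h) _

theorem mem_strictAbove_shrink (x : ProbVal T) (a : {a : NNReal // a < 1}) :
    x ∈ strictAbove (shrink hb x a) := by
  intro U hU h
  rw [shrink_apply hb x a hU] at h ⊢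
  exact mul_lt_of_lt_one_left (pos_iff_ne_zero.2 (right_ne_zero_of_mul h)) a.2

theorem isLUB_shrink (x : ProbVal T) : IsLUB (Set.range (shrink hb x)) x := by
  constructor
  · rintro _ ⟨a, rfl⟩
    exact strictAbove_subset_Ici _ (mem_strictAbove_shrink hb x a)
  · intro μ hμ U
    by_cases hU : U = ⊤
    · rw [hU, x.2.total, μ.2.total]
    refine NNReal.le_of_forall_lt_one_mul_le fun a ha => ?_
    rw [← shrink_apply hb x ⟨a, ha⟩ hU]
    exact hμ ⟨⟨a, ha⟩, rfl⟩ U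

theorem shrink_range_directed (x : ProbVal T) : DirectedOn (· ≤ ·) (Set.range (shrink hb x)) :=
  (shrink_mono hb x).directed_le.directedOn_range

theorem shrink_range_nonempty (x : ProbVal T) : (Set.range (shrink hb x)).Nonempty :=
  ⟨_, ⟨0, zero_lt_one⟩, rfl⟩

theorem isContinuousDcpo_probVal : IsContinuousDcpo (ProbVal T) := by
  refine ⟨fun d hne hd => ?_, fun x => ?_⟩
  · obtain ⟨s, hs, -⟩ := exists_isLUB_eval d hne hd
    exact ⟨s, hs⟩
  have happ : ∀ a, approxes (Set.Ici (shrink hb x a)) x := fun a =>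
    approxes_of_mem_strictAbove (mem_strictAbove_shrink hb x a)
  have hcof : ∀ y, approxes (Set.Ici y) x → ∃ a, y ≤ shrink hb x a := by
    intro y hy
    obtain ⟨_, ⟨a, rfl⟩, hz⟩ := hy _ (shrink_range_nonempty hb x) (shrink_range_directed hb x) x
      (isLUB_shrink hb x) le_rfl
    exact ⟨a, hz⟩
  refine ⟨⟨_, happ ⟨0, zero_lt_one⟩⟩, ?_, ?_, ?_⟩
  · intro y hy z hz
    obtain ⟨a, ha⟩ := hcof y hy
    obtain ⟨a', ha'⟩ := hcof z hz
    exact ⟨_, happ (a ⊔ a'), ha.trans (shrink_mono hb x le_sup_left),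
      ha'.trans (shrink_mono hb x le_sup_right)⟩
  · intro y hy
    obtain ⟨a, ha⟩ := hcof y hy
    exact ha.trans ((isLUB_shrink hb x).1 ⟨a, rfl⟩)
  · intro μ hμ
    refine (isLUB_shrink hb x).2 ?_
    rintro _ ⟨a, rfl⟩
    exact hμ (happ a)

theorem scottTop_probVal_eq_generateFrom :
    scottTop (ProbVal T) = generateFrom
      (Set.range fun p : Opens T × ℚ => {G : ProbVal T | (p.2 : ℝ).toNNReal < G.1 p.1}) := by
  apply le_antisymm
  · apply le_generateFrom
    rintro _ ⟨p, rfl⟩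
    exact scottOpen_lt_eval _ _
  · intro S hS
    have hlt : ∀ (U : Opens T) (c : NNReal), IsOpen[generateFrom (Set.range fun p : Opens T × ℚ =>
        {G : ProbVal T | (p.2 : ℝ).toNNReal < G.1 p.1})] {G : ProbVal T | c < G.1 U} := by
      intro U c
      have : {G : ProbVal T | c < G.1 U} = ⋃ q : {q : ℚ // c ≤ (q : ℝ).toNNReal},
          {G : ProbVal T | (q.1 : ℝ).toNNReal < G.1 U} := by
        ext G
        simp only [Set.mem_iUnion, Set.mem_ofPred_eq]
        constructor
        · intro h
          obtain ⟨q, -, h1, h2⟩ := (NNReal.lt_iff_exists_rat_btwn _ _).1 h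
          exact ⟨⟨q, h1.le⟩, h2⟩
        · rintro ⟨q, hq⟩
          exact lt_of_le_of_lt q.2 hq
      rw [this]
      letI := generateFrom (Set.range fun p : Opens T × ℚ =>
        {G : ProbVal T | (p.2 : ℝ).toNNReal < G.1 p.1})
      exact isOpen_iUnion fun q => isOpen_generateFrom_of_mem ⟨(U, q.1), rfl⟩
    refine (@isOpen_iff_forall_mem_open _ (generateFrom _) S).2 fun x hx => ?_
    obtain ⟨_, ⟨a, rfl⟩, ha⟩ := hS.2 _ (shrink_range_nonempty hb x) (shrink_range_directed hb x) x
      (isLUB_shrink hb x) hx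
    exact ⟨strictAbove (shrink hb x a), fun G hG => hS.1 (strictAbove_subset_Ici _ hG) ha,
      isOpen_strictAbove _ hlt _, mem_strictAbove_shrink hb x a⟩

theorem exists_countable_basis_probVal :
    ∃ B : Set (Set (ProbVal T)), B.Countable ∧
      @TopologicalSpace.IsTopologicalBasis (ProbVal T) (scottTop (ProbVal T)) B := by
  let := scottTop (ProbVal T)
  have : SecondCountableTopology (ProbVal T) :=
    ⟨⟨_, Set.countable_range _, scottTop_probVal_eq_generateFrom hb⟩⟩
  obtain ⟨B, hB, -, hB'⟩ := TopologicalSpace.exists_countable_basis (ProbVal T)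
  exact ⟨B, hB, hB'⟩

/-- The least element is the Dirac valuation at the root. -/
theorem exists_bot_probVal : ∃ bot : ProbVal T, ∀ ν, bot ≤ ν := by
  classical
  have h : IsProbValuation fun U : Opens T => if b ∈ U then (1 : NNReal) else 0 := by
    apply isProbValuation_of_finite
    · simp
    · intro U V hUV
      by_cases hV : b ∈ V
      · simp only [hV, if_true]
        split_ifs <;> simp
      · simp [hV, show b ∉ U from fun h => hV (hUV h)]
    · intro U V
      by_cases hU : b ∈ U
      · rw [hb U hU]; simp
      by_cases hV : b ∈ V
      · rw [hb V hV]; simp [add_comm]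
      have h1 : b ∉ U ⊔ V := by
        rw [← SetLike.mem_coe, Opens.coe_sup]
        exact fun h => h.elim hU hV
      have h2 : b ∉ U ⊓ V := fun h => hU (inf_le_left (b := V) h)
      simp [hU, hV, h1, h2]
    · simp
  refine ⟨⟨_, h⟩, fun ν U => ?_⟩
  by_cases hU : b ∈ U
  · rw [hb U hU, ν.2.total]; simp
  · simp [hU]

end Shrink

theorem ProbVal.sup_eq_sum (μ : ProbVal T) {ι : Type*} (s : Finset ι) (f : ι → Opens T)
    (hf : (s : Set ι).PairwiseDisjoint f) : μ.1 (s.sup f) = ∑ i ∈ s, μ.1 (f i) := by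
  classical
  induction s using Finset.induction_on with
  | empty => simpa using μ.2.empty
  | insert i s hi ih =>
    have hdis : f i ⊓ s.sup f = ⊥ := by
      rw [← disjoint_iff, Finset.disjoint_sup_right]
      intro j hj
      exact hf (by simp) (by simp [hj]) (by rintro rfl; exact hi hj)
    have := μ.2.modular (f i) (s.sup f)
    rw [hdis, μ.2.empty, add_zero] at this
    rw [Finset.sup_insert, Finset.sum_insert hi, this, ih]
    exact hf.subset (by simp)

end FiniteSpace

/-! ### Bounded suprema over a tree -/

section Tree

variable {T : Type u} [PartialOrder T] [TopologicalSpace T]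

open Classical in
/-- The minimal elements of a set, in a finite poset. -/
noncomputable def minElts [Fintype T] (U : Set T) : Finset T :=
  Finset.univ.filter fun t => t ∈ U ∧ ∀ s < t, s ∉ U

omit [TopologicalSpace T] in
theorem mem_minElts [Fintype T] {U : Set T} {t : T} :
    t ∈ minElts U ↔ t ∈ U ∧ ∀ s < t, s ∉ U := by
  simp [minElts]

omit [TopologicalSpace T] in
theorem exists_minElts_le [Fintype T] {U : Set T} {t : T} (ht : t ∈ U) :
    ∃ s ∈ minElts U, s ≤ t := by
  obtain ⟨m, hm, hmin⟩ := U.toFinite.exists_le_minimal ht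
  exact ⟨m, mem_minElts.2 ⟨hmin.1, fun s hs h => hs.not_ge (hmin.2 h hs.le)⟩, hm⟩

/-- The open set `↑t`, for a topology whose opens are the upper sets. -/
def cone (hopen : ∀ U : Set T, IsOpen U ↔ IsUpperSet U) (t : T) : Opens T :=
  ⟨Set.Ici t, (hopen _).2 (isUpperSet_Ici t)⟩

variable [Fintype T] (hopen : ∀ U : Set T, IsOpen U ↔ IsUpperSet U)
  (htree : ∀ t a b : T, a ≤ t → b ≤ t → a ≤ b ∨ b ≤ a)

include hopen htree

theorem ProbVal.eq_sum_minElts (μ : ProbVal T) (U : Opens T) :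
    μ.1 U = ∑ t ∈ minElts (U : Set T), μ.1 (cone hopen t) := by
  have hU : U = (minElts (U : Set T)).sup (cone hopen) := by
    apply le_antisymm
    · intro t ht
      obtain ⟨s, hs, hst⟩ := exists_minElts_le (U := (U : Set T)) ht
      exact Finset.le_sup (f := cone hopen) hs hst
    · refine Finset.sup_le fun t ht s hs => ?_
      exact (hopen _).1 U.2 hs (mem_minElts.1 ht).1
  conv_lhs => rw [hU]
  apply ProbVal.sup_eq_sum
  intro s hs t ht hst
  rw [Finset.mem_coe, mem_minElts] at hs ht
  -- A common upper bound of two minimal elements would make them comparable.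
  rw [Function.onFun, disjoint_iff_inf_le]
  intro x hx
  rcases htree x s t hx.1 hx.2 with h | h
  · exact (ht.2 s (lt_of_le_of_ne h hst) hs.1).elim
  · exact (hs.2 t (lt_of_le_of_ne h hst.symm) ht.1).elim

omit [TopologicalSpace T] hopen in
/-- Modularity of the family of minimal elements: on the chain `↓t` one of the two upper sets
contains the other, so `{U ∪ V, U ∩ V}` and `{U, V}` have the same traces there. -/
theorem sum_minElts_modular (F : T → NNReal) {U V : Set T} (hU : IsUpperSet U)
    (hV : IsUpperSet V) :
    ∑ t ∈ minElts (U ∪ V), F t + ∑ t ∈ minElts (U ∩ V), F t =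
      ∑ t ∈ minElts U, F t + ∑ t ∈ minElts V, F t := by
  classical
  simp only [minElts, Finset.sum_filter, ← Finset.sum_add_distrib]
  refine Finset.sum_congr rfl fun t _ => ?_
  have key : (∀ s ≤ t, s ∈ U → s ∈ V) ∨ (∀ s ≤ t, s ∈ V → s ∈ U) := by
    by_contra! h
    obtain ⟨⟨s, hs, hsU, hsV⟩, r, hr, hrV, hrU⟩ := h
    rcases htree t s r hs hr with h | h
    · exact hrU (hU h hsU)
    · exact hsV (hV h hrV)
  have aux : ∀ {A B : Set T}, (∀ s ≤ t, (s ∈ A ↔ s ∈ B)) →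
      ((t ∈ A ∧ ∀ s < t, s ∉ A) ↔ (t ∈ B ∧ ∀ s < t, s ∉ B)) := fun h =>
    and_congr (h t le_rfl) (forall₂_congr fun s hs => not_congr (h s hs.le))
  have ite_aux : ∀ {A B : Set T}, (∀ s ≤ t, (s ∈ A ↔ s ∈ B)) →
      (if t ∈ A ∧ ∀ s < t, s ∉ A then F t else 0) =
        if t ∈ B ∧ ∀ s < t, s ∉ B then F t else 0 := fun h => by simp only [aux h]
  rcases key with h | h
  · rw [ite_aux (A := U ∪ V) (B := V) fun s hs => ⟨fun k => k.elim (h s hs) id, Or.inr⟩,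
      ite_aux (A := U ∩ V) (B := U) fun s hs => ⟨And.left, fun k => ⟨k, h s hs k⟩⟩, add_comm]
  · rw [ite_aux (A := U ∪ V) (B := U) fun s hs => ⟨fun k => k.elim id (h s hs), Or.inl⟩,
      ite_aux (A := U ∩ V) (B := V) fun s hs => ⟨And.right, fun k => ⟨h s hs k, k⟩⟩]

theorem exists_isLUB_pair {b : T} (hb : ∀ x, b ≤ x) (ν₁ ν₂ : ProbVal T)
    (hbd : ∃ μ, ν₁ ≤ μ ∧ ν₂ ≤ μ) : ∃ s, IsLUB {ν₁, ν₂} s := by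
  classical
  let I : Type u := {μ : ProbVal T // ν₁ ≤ μ ∧ ν₂ ≤ μ}
  have : Nonempty I := let ⟨μ, hμ⟩ := hbd; ⟨⟨μ, hμ⟩⟩
  let F : T → NNReal := fun t => ⨅ μ : I, μ.1.1 (cone hopen t)
  have hF : ∀ (μ : I) t, F t ≤ μ.1.1 (cone hopen t) := fun μ t =>
    ciInf_le (OrderBot.bddBelow _) μ
  have hprob : IsProbValuation fun U : Opens T => ∑ t ∈ minElts (U : Set T), F t := by
    apply isProbValuation_of_finite
    · simp [minElts]
    · intro U V hUV
      -- Group the minimal elements of `U` according to the minimal elements of `V` below them.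
      have hgroup : ∑ t ∈ minElts (U : Set T), F t ≤ ∑ v ∈ minElts (V : Set T),
          ∑ t ∈ (minElts (U : Set T)).filter fun t => v ≤ t, F t := by
        simp only [Finset.sum_filter]
        rw [Finset.sum_comm]
        refine Finset.sum_le_sum fun t ht => ?_
        obtain ⟨v, hv, hvt⟩ := exists_minElts_le (U := (V : Set T)) (hUV (mem_minElts.1 ht).1)
        calc F t = if v ≤ t then F t else 0 := (if_pos hvt).symm
          _ ≤ _ := Finset.single_le_sum (f := fun v => if v ≤ t then F t else 0)
            (fun _ _ => zero_le) hv
      refine hgroup.trans ?_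
      refine Finset.sum_le_sum fun v _ => le_ciInf fun μ => ?_
      calc ∑ t ∈ (minElts (U : Set T)).filter fun t => v ≤ t, F t
          ≤ ∑ t ∈ (minElts (U : Set T)).filter fun t => v ≤ t, μ.1.1 (cone hopen t) :=
            Finset.sum_le_sum fun t _ => hF μ t
        _ ≤ ∑ t ∈ minElts ((U ⊓ cone hopen v : Opens T) : Set T), μ.1.1 (cone hopen t) := by
            refine Finset.sum_le_sum_of_subset fun t ht => ?_
            obtain ⟨ht, hvt⟩ := Finset.mem_filter.1 ht
            rw [mem_minElts] at ht ⊢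
            exact ⟨⟨ht.1, hvt⟩, fun s hs h => ht.2 s hs h.1⟩
        _ = μ.1.1 (U ⊓ cone hopen v) := (μ.1.eq_sum_minElts hopen htree _).symm
        _ ≤ μ.1.1 (cone hopen v) := μ.1.2.mono _ _ inf_le_right
    · intro U V
      simp only [Opens.coe_sup, Opens.coe_inf]
      exact sum_minElts_modular htree F ((hopen _).1 U.2) ((hopen _).1 V.2)
    · have h1 : minElts ((⊤ : Opens T) : Set T) = {b} := by
        ext t
        simp only [mem_minElts, Opens.coe_top, Set.mem_univ, not_true, Finset.mem_singleton,
          true_and]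
        exact ⟨fun h => by_contra fun hne => h b (lt_of_le_of_ne (hb t) (Ne.symm hne)),
          fun h s hs => (h ▸ hs).not_ge (hb s)⟩
      have h2 : cone hopen b = ⊤ := by
        ext x; simpa [cone] using hb x
      rw [h1, Finset.sum_singleton]
      exact (iInf_congr fun μ : I => by rw [h2, μ.1.2.total]).trans ciInf_const
  have hle : ∀ ν : ProbVal T, (∀ μ : I, ν ≤ μ.1) → ν ≤ ⟨_, hprob⟩ := by
    intro ν h U
    rw [ν.eq_sum_minElts hopen htree U]
    exact Finset.sum_le_sum fun t _ => le_ciInf fun μ => h μ _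
  refine ⟨⟨_, hprob⟩, ?_, ?_⟩
  · rintro ν (rfl | rfl)
    exacts [hle _ fun μ => μ.2.1, hle _ fun μ => μ.2.2]
  · intro μ hμ U
    rw [μ.eq_sum_minElts hopen htree U]
    exact Finset.sum_le_sum fun t _ => hF ⟨μ, hμ (by simp), hμ (by simp)⟩ t

end Tree

theorem scottOpen_iff_isUpperSet {T : Type u} [PartialOrder T] [Finite T] (U : Set T) :
    ScottOpen U ↔ IsUpperSet U := by
  refine ⟨fun h => h.1, fun h => ⟨h, fun d hne hd a ha haU => ?_⟩⟩
  -- A finite directed set contains its supremum.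
  obtain ⟨m, hm⟩ := d.toFinite.exists_maximal hne
  have : a ≤ m := ha.2 fun x hx => by
    obtain ⟨z, hz, h1, h2⟩ := hd m hm.1 x hx
    exact h2.trans (hm.2 hz h1)
  exact ⟨m, hm.1, h this haU⟩

/-- For every finite tree `T`, `V_1(T)` is a countably-based bc-domain: a pointed
continuous dcpo in which every pair of elements with an upper bound has a least upper
bound, whose Scott topology has a countable base. -/
theorem probVal_of_finite_tree {T : Type u} [PartialOrder T] [Finite T]
    (hb : ∃ b : T, ∀ x, b ≤ x)
    (htree : ∀ t a b : T, a ≤ t → b ≤ t → a ≤ b ∨ b ≤ a) :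
    letI : TopologicalSpace T := scottTop T
    IsContinuousDcpo (ProbVal T) ∧
    (∃ bot : ProbVal T, ∀ ν, bot ≤ ν) ∧
    (∀ ν₁ ν₂ : ProbVal T, (∃ μ, ν₁ ≤ μ ∧ ν₂ ≤ μ) →
      ∃ s, IsLUB {ν₁, ν₂} s) ∧
    ∃ B : Set (Set (ProbVal T)), B.Countable ∧
      @TopologicalSpace.IsTopologicalBasis (ProbVal T) (scottTop (ProbVal T)) B := by
  obtain ⟨b, hb⟩ := hb
  letI : TopologicalSpace T := scottTop T
  have := Fintype.ofFinite T
  have hopen : ∀ U : Set T, IsOpen U ↔ IsUpperSet U := scottOpen_iff_isUpperSet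
  have hroot : ∀ U : Opens T, b ∈ U → U = ⊤ := fun U h =>
    top_le_iff.1 fun x _ => (hopen _).1 U.2 (hb x) h
  exact ⟨isContinuousDcpo_probVal hroot, exists_bot_probVal hroot,
    exists_isLUB_pair hopen htree hb, exists_countable_basis_probVal hroot⟩
end
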